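/- Let F be the free group on t₁,…,t_k and let w ∈ F have reduced length n. Let m_i be the exponent sum of t_i in w and set w̄ = t₁^{m₁}⋯t_k^{m_k}. Then there exist p ≤ n², elements u₁,…,u_p ∈ F each of reduced length at most n, indices 1 ≤ i_s < j_s ≤ k and signs ε_s ∈ {±1} (1 ≤ s ≤ p), such that w = w̄ · ∏_{s=1}^p u_s⁻¹·[t_{i_s}, t_{j_s}]^{ε_s}·u_s holds in F. -/

import Mathlib

open Function

/-- The length of the reduced word representing an element of a free group. -/
noncomputable def freeNorm {X : Type*} (w : FreeGroup X) : ℕ :=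
  letI := Classical.decEq X
  w.toWord.length

/-- `w` equals a product of exactly `N` conjugates of elements of `R ∪ R⁻¹`. -/
def AreaIs {G : Type*} [Group G] (R : Set G) (w : G) (N : ℕ) : Prop :=
  ∃ r f : Fin N → G, (∀ i, r i ∈ R ∨ (r i)⁻¹ ∈ R) ∧
    w = (List.ofFn fun i => (f i)⁻¹ * r i * f i).prod

/-- The area of `w` with respect to the relators `R` is at most `N`. -/
def AreaLe {G : Type*} [Group G] (R : Set G) (w : G) (N : ℕ) : Prop :=
  ∃ N' ≤ N, AreaIs R w N'

/-- `f ≼ g` : there is `C > 0` with `f n ≤ C * g (C * n) + C * n + C` for all `n`. -/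
def Dominates (f g : ℕ → ℕ) : Prop :=
  ∃ C : ℕ, 0 < C ∧ ∀ n, f n ≤ C * g (C * n) + C * n + C

/-- `f ≈ g` : mutual domination. -/
def DehnEquiv (f g : ℕ → ℕ) : Prop := Dominates f g ∧ Dominates g f

/-- `δ` is the Dehn function of the presentation with relator set `R`. -/
def IsDehnFunctionOf {X : Type*} (R : Set (FreeGroup X)) (δ : ℕ → ℕ) : Prop :=
  ∀ n, IsLeast {N | ∀ w ∈ Subgroup.normalClosure R, freeNorm w ≤ n → AreaLe R w N} (δ n)

/-- A group is metabelian if its derived subgroup is abelian. -/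
def IsMetabelian (G : Type*) [Group G] : Prop :=
  ∀ a b : G, a ∈ commutator G → b ∈ commutator G → a * b = b * a

instance derivedSeriesNormalInst {G : Type*} [Group G] (n : ℕ) : (derivedSeries G n).Normal :=
  derivedSeries_normal G n

/-- The free metabelian group on `X`: the free group modulo its second derived subgroup. -/
abbrev FreeMetabelian (X : Type*) := FreeGroup X ⧸ derivedSeries (FreeGroup X) 2

/-- The word length of `w` in the free metabelian group is at most `n`. -/
def mNormLe {X : Type*} (w : FreeMetabelian X) (n : ℕ) : Prop :=
  ∃ v : FreeGroup X, QuotientGroup.mk' (derivedSeries (FreeGroup X) 2) v = w ∧ freeNorm v ≤ n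

/-- `δ` is the relative Dehn function (in the variety of metabelian groups) of the
relative presentation with relator set `R`. -/
def IsRelDehnFunctionOf {X : Type*} (R : Set (FreeMetabelian X)) (δ : ℕ → ℕ) : Prop :=
  ∀ n, IsLeast {N | ∀ w ∈ Subgroup.normalClosure R, mNormLe w n → AreaLe R w N} (δ n)

/-- The paper's commutator convention: `[x, y] = x⁻¹ * y⁻¹ * x * y`. -/
def pcomm {G : Type*} [Group G] (x y : G) : G := x⁻¹ * y⁻¹ * x * y

/-- A group has torsion-free rank `k` if it has a finite-index subgroup isomorphic to `ℤ^k`. -/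
def HasTFRank (Q : Type*) [Group Q] (k : ℕ) : Prop :=
  ∃ H : Subgroup Q, H.index ≠ 0 ∧ Nonempty (H ≃* Multiplicative (Fin k → ℤ))

/-- `G ⧸ A` is abelian and has torsion-free rank `j`. -/
def QuotientRankProp {G : Type*} [Group G] (A : Subgroup G) [A.Normal] (j : ℕ) : Prop :=
  (∀ x y : G ⧸ A, x * y = y * x) ∧ HasTFRank (G ⧸ A) j

/-- The set of torsion-free ranks of quotients `G ⧸ A` by abelian normal subgroups `A`
with `G ⧸ A` abelian. -/
def abelianRankSet (G : Type*) [Group G] : Set ℕ :=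
  {j | ∃ A : Subgroup G, ∃ h : A.Normal, (∀ x y : G, x ∈ A → y ∈ A → x * y = y * x) ∧
    @QuotientRankProp G _ A h j}

/-- The exponent sum of the letter `s` in a word of the free group on `Fin k`. -/
def expSum {k : ℕ} (s : Fin k) : FreeGroup (Fin k) →* Multiplicative ℤ :=
  FreeGroup.lift fun i => Multiplicative.ofAdd (if i = s then (1 : ℤ) else 0)

/-- The ordered word `w̄ = t₁^{m₁}⋯t_k^{m_k}` with the same exponent sums as `w`. -/
def obar {k : ℕ} (w : FreeGroup (Fin k)) : FreeGroup (Fin k) :=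
  (List.ofFn fun s : Fin k => (FreeGroup.of s) ^ (Multiplicative.toAdd (expSum s w))).prod

/-!
Build `w` letter by letter, keeping the part `v` already read in the form `v̄ * g` with `g` a
product of conjugated commutators. When a letter `t_i^{±1}` arrives, conjugate `g` by it, which
lengthens every conjugator by one, and move the letter to the left past the powers of `t_j` with
`j > i` in `v̄`. Since `[ab, x] = b⁻¹[a, x]b · [b, x]`, this costs one conjugated commutator per
letter passed, and `v̄` has at most as many letters as `v`. A word of length `n` thus needs at most
`0 + 1 + ⋯ + (n - 1) = n.choose 2` commutators.
-/

lemma freeNorm_eq_norm {α : Type*} [DecidableEq α] (w : FreeGroup α) : freeNorm w = w.norm := by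
  unfold freeNorm FreeGroup.norm
  congr!

lemma pcomm_mul_left {G : Type*} [Group G] (a b x : G) :
    pcomm (a * b) x = b⁻¹ * pcomm a x * b * pcomm b x := by
  simp [pcomm, mul_assoc]

section Letters

variable {α : Type*}

lemma exists_mk_append_singleton_eq (W : List (α × Bool)) (x : α × Bool) :
    ∃ ε : ℤˣ, FreeGroup.mk (W ++ [x]) = FreeGroup.mk W * FreeGroup.of x.1 ^ (ε : ℤ) := by
  obtain ⟨i, _ | _⟩ := x
  · exact ⟨-1, by simp [← FreeGroup.mul_mk, FreeGroup.of, FreeGroup.inv_mk, FreeGroup.invRev]⟩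
  · exact ⟨1, by simp [← FreeGroup.mul_mk, FreeGroup.of]⟩

variable [DecidableEq α]

lemma norm_of_zpow (a : α) (n : ℤ) : (FreeGroup.of a ^ n).norm = n.natAbs := by
  obtain ⟨n, rfl | rfl⟩ := n.eq_nat_or_neg <;> simp

end Letters

section CommutatorConjugates

open scoped Pointwise

variable {α : Type*} [DecidableEq α]

/-- The conjugates `u⁻¹ * [t_i, t_j]^{±1} * u` with `i < j` and `u` of length at most `L`: the
factors allowed in the theorem. A product of `p` of them is an element of the pointwise power
`commutatorConjugates L ^ p`. -/
def commutatorConjugates [LT α] (L : ℕ) : Set (FreeGroup α) :=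
  {g | ∃ (u : FreeGroup α) (i j : α) (ε : ℤˣ), u.norm ≤ L ∧ i < j ∧
    g = u⁻¹ * pcomm (FreeGroup.of i) (FreeGroup.of j) ^ (ε : ℤ) * u}

lemma commutatorConjugates_mono [LT α] :
    Monotone (commutatorConjugates : ℕ → Set (FreeGroup α)) := by
  rintro L M hLM g ⟨u, i, j, ε, hu, hij, rfl⟩
  exact ⟨u, i, j, ε, hu.trans hLM, hij, rfl⟩

lemma commutatorConjugates_pow_mono [LT α] {L M : ℕ} (hLM : L ≤ M) (p : ℕ) :
    (commutatorConjugates L : Set (FreeGroup α)) ^ p ⊆ commutatorConjugates M ^ p :=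
  Set.pow_subset_pow_left (commutatorConjugates_mono hLM)

lemma conj_mem_commutatorConjugates [LT α] {L : ℕ} {g : FreeGroup α}
    (hg : g ∈ commutatorConjugates L) (x : FreeGroup α) :
    x⁻¹ * g * x ∈ commutatorConjugates (L + x.norm) := by
  obtain ⟨u, i, j, ε, hu, hij, rfl⟩ := hg
  exact ⟨u * x, i, j, ε, (FreeGroup.norm_mul_le u x).trans (by gcongr), hij, by group⟩

lemma conj_mem_commutatorConjugates_pow [LT α] {L p : ℕ} {g : FreeGroup α}
    (hg : g ∈ commutatorConjugates L ^ p) (x : FreeGroup α) :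
    x⁻¹ * g * x ∈ commutatorConjugates (L + x.norm) ^ p := by
  have himage : MulAut.conj x⁻¹ '' commutatorConjugates L ⊆ commutatorConjugates (L + x.norm) := by
    rintro _ ⟨c, hc, rfl⟩
    simpa using conj_mem_commutatorConjugates hc x
  have hconj : MulAut.conj x⁻¹ g ∈ (MulAut.conj x⁻¹ '' commutatorConjugates L) ^ p := by
    rw [← Set.image_pow]
    exact Set.mem_image_of_mem _ hg
  simpa using Set.pow_subset_pow_left himage hconj

lemma pcomm_of_zpow_units_mem [LT α] {i j : α} (hij : i < j) (δ ε : ℤˣ) :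
    pcomm (FreeGroup.of j ^ (δ : ℤ)) (FreeGroup.of i ^ (ε : ℤ)) ∈ commutatorConjugates 2 := by
  obtain rfl | rfl := Int.units_eq_one_or δ <;> obtain rfl | rfl := Int.units_eq_one_or ε
  · exact ⟨1, i, j, -1, by simp, hij, by simp [pcomm, mul_assoc]⟩
  · exact ⟨(FreeGroup.of i)⁻¹, i, j, 1, by simp, hij, by simp [pcomm, mul_assoc]⟩
  · exact ⟨(FreeGroup.of j)⁻¹, i, j, 1, by simp, hij, by simp [pcomm, mul_assoc]⟩
  · refine ⟨(FreeGroup.of i)⁻¹ * (FreeGroup.of j)⁻¹, i, j, -1, ?_, hij, ?_⟩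
    · simpa using FreeGroup.norm_mul_le (FreeGroup.of i)⁻¹ (FreeGroup.of j)⁻¹
    · simp [pcomm, mul_assoc]

lemma pcomm_mul_mem [LT α] {a b x : FreeGroup α} {M N : ℕ}
    (ha : pcomm a x ∈ commutatorConjugates (M + 1) ^ M)
    (hb : pcomm b x ∈ commutatorConjugates (N + 1) ^ N) (hbN : b.norm ≤ N) :
    pcomm (a * b) x ∈ commutatorConjugates (M + N + 1) ^ (M + N) := by
  rw [pcomm_mul_left, pow_add]
  exact Set.mul_mem_mul
    (commutatorConjugates_pow_mono (by omega) M (conj_mem_commutatorConjugates_pow ha b))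
    (commutatorConjugates_pow_mono (by omega) N hb)

lemma pcomm_of_zpow_mem [LT α] {i j : α} (hij : i < j) (m : ℤ) (ε : ℤˣ) :
    pcomm (FreeGroup.of j ^ m) (FreeGroup.of i ^ (ε : ℤ)) ∈
      commutatorConjugates (m.natAbs + 1) ^ m.natAbs := by
  have hpow (δ : ℤˣ) (n : ℕ) :
      pcomm ((FreeGroup.of j ^ (δ : ℤ)) ^ n) (FreeGroup.of i ^ (ε : ℤ)) ∈
        commutatorConjugates (n + 1) ^ n := by
    induction n with
    | zero => simp [pcomm]
    | succ n ih =>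
      have hnorm : (FreeGroup.of j ^ (δ : ℤ)).norm ≤ 1 := by simp [norm_of_zpow]
      rw [pow_succ]
      refine pcomm_mul_mem ih ?_ hnorm
      simpa using pcomm_of_zpow_units_mem hij δ ε
  obtain hm | hm := Int.natAbs_eq m
  · convert hpow 1 m.natAbs using 2
    rw [Units.val_one, zpow_one, ← zpow_natCast, ← hm]
  · convert hpow (-1) m.natAbs using 2
    rw [Units.val_neg, Units.val_one, zpow_neg_one, inv_pow, ← zpow_natCast, ← zpow_neg, ← hm]

end CommutatorConjugates

section OrderedProd

open scoped Pointwise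

variable {α : Type*}

/-- The product of the powers `t_a ^ m a`, for `a` running through `l` in order. The word `w̄` is
the case where `l` lists all generators and `m` is the vector of exponent sums of `w`. -/
def orderedProd (l : List α) (m : α → ℤ) : FreeGroup α :=
  (l.map fun a => FreeGroup.of a ^ m a).prod

@[simp]
lemma orderedProd_nil (m : α → ℤ) : orderedProd [] m = 1 := rfl

@[simp]
lemma orderedProd_cons (a : α) (l : List α) (m : α → ℤ) :
    orderedProd (a :: l) m = FreeGroup.of a ^ m a * orderedProd l m := by
  simp [orderedProd]

lemma orderedProd_append (l₁ l₂ : List α) (m : α → ℤ) :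
    orderedProd (l₁ ++ l₂) m = orderedProd l₁ m * orderedProd l₂ m := by
  simp [orderedProd]

variable [DecidableEq α]

lemma orderedProd_add_single_of_notMem {l : List α} {i : α} (hi : i ∉ l) (m : α → ℤ) (c : ℤ) :
    orderedProd l (m + Pi.single i c) = orderedProd l m := by
  refine congrArg List.prod (List.map_congr_left fun a ha => ?_)
  simp [Pi.single_eq_of_ne (ne_of_mem_of_not_mem ha hi)]

lemma norm_orderedProd_le (l : List α) (m : α → ℤ) :
    (orderedProd l m).norm ≤ (l.map fun a => (m a).natAbs).sum := by
  induction l with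
  | nil => simp
  | cons a l ih =>
    calc (orderedProd (a :: l) m).norm
        ≤ (FreeGroup.of a ^ m a).norm + (orderedProd l m).norm := by
          rw [orderedProd_cons]
          exact FreeGroup.norm_mul_le _ _
      _ ≤ ((a :: l).map fun a => (m a).natAbs).sum := by
          rw [norm_of_zpow, List.map_cons, List.sum_cons]
          gcongr

lemma pcomm_orderedProd_mem [LT α] {l : List α} {i : α} (hi : ∀ a ∈ l, i < a) (m : α → ℤ)
    (ε : ℤˣ) :
    pcomm (orderedProd l m) (FreeGroup.of i ^ (ε : ℤ)) ∈
      commutatorConjugates ((l.map fun a => (m a).natAbs).sum + 1) ^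
        (l.map fun a => (m a).natAbs).sum := by
  induction l with
  | nil => simp [pcomm]
  | cons a l ih =>
    rw [List.forall_mem_cons] at hi
    rw [orderedProd_cons, List.map_cons, List.sum_cons]
    exact pcomm_mul_mem (pcomm_of_zpow_mem hi.1 (m a) ε) (ih hi.2) (norm_orderedProd_le l m)

lemma exists_orderedProd_mul_of_zpow_eq [Preorder α] {l : List α} (hl : l.Pairwise (· < ·)) {i : α}
    (hi : i ∈ l) (m : α → ℤ) (ε : ℤˣ) {N : ℕ} (hN : (l.map fun a => (m a).natAbs).sum ≤ N) :
    ∃ p ≤ N, ∃ g ∈ commutatorConjugates (N + 1) ^ p,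
      orderedProd l m * FreeGroup.of i ^ (ε : ℤ) = orderedProd l (m + Pi.single i (ε : ℤ)) * g := by
  obtain ⟨l₁, l₂, rfl⟩ := List.append_of_mem hi
  obtain ⟨-, hright, hleft⟩ := List.pairwise_append.1 hl
  have hlt : ∀ a ∈ l₂, i < a := (List.pairwise_cons.1 hright).1
  have hi₁ : i ∉ l₁ := fun h => (hleft i h i List.mem_cons_self).false
  have hi₂ : i ∉ l₂ := fun h => (hlt i h).false
  have hN₂ : (l₂.map fun a => (m a).natAbs).sum ≤ N := by
    simp only [List.map_append, List.map_cons, List.sum_append, List.sum_cons] at hN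
    omega
  refine ⟨_, hN₂, pcomm (orderedProd l₂ m) (FreeGroup.of i ^ (ε : ℤ)),
    commutatorConjugates_pow_mono (by omega) _ (pcomm_orderedProd_mem hlt m ε), ?_⟩
  rw [orderedProd_append, orderedProd_append, orderedProd_cons, orderedProd_cons,
    orderedProd_add_single_of_notMem hi₁, orderedProd_add_single_of_notMem hi₂, Pi.add_apply,
    Pi.single_eq_same, zpow_add, pcomm]
  group

end OrderedProd

section ExponentVector

open scoped Pointwise

variable {k : ℕ}

/-- The vector `(m₁, …, m_k)` of exponent sums of `w`. -/
def exponentVector (w : FreeGroup (Fin k)) : Fin k → ℤ :=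
  fun s => Multiplicative.toAdd (expSum s w)

@[simp]
lemma exponentVector_one : exponentVector (1 : FreeGroup (Fin k)) = 0 := by
  ext s
  simp [exponentVector]

lemma exponentVector_mul_of_zpow (v : FreeGroup (Fin k)) (i : Fin k) (c : ℤ) :
    exponentVector (v * FreeGroup.of i ^ c) = exponentVector v + Pi.single i c := by
  ext s
  simp [exponentVector, expSum, Pi.single_apply, eq_comm]

lemma obar_eq_orderedProd (w : FreeGroup (Fin k)) :
    obar w = orderedProd (List.finRange k) (exponentVector w) :=
  congrArg List.prod List.ofFn_eq_map

lemma sum_natAbs_exponentVector_mk_le (W : List (Fin k × Bool)) :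
    ((List.finRange k).map fun s => (exponentVector (FreeGroup.mk W) s).natAbs).sum ≤ W.length := by
  rw [← List.ofFn_eq_map, List.sum_ofFn]
  induction W using List.reverseRecOn with
  | nil => simp [← FreeGroup.one_eq_mk]
  | append_singleton W x ih =>
    obtain ⟨ε, hε⟩ := exists_mk_append_singleton_eq W x
    have hsingle : ∑ s, ((Pi.single x.1 (ε : ℤ) : Fin k → ℤ) s).natAbs = 1 := by
      simp [Pi.single_apply, apply_ite Int.natAbs]
    rw [hε, exponentVector_mul_of_zpow, List.length_append, List.length_singleton]
    calc ∑ s, ((exponentVector (FreeGroup.mk W) + Pi.single x.1 (ε : ℤ) : Fin k → ℤ) s).natAbs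
        ≤ ∑ s, ((exponentVector (FreeGroup.mk W) s).natAbs +
            ((Pi.single x.1 (ε : ℤ) : Fin k → ℤ) s).natAbs) := by
          gcongr
          exact Int.natAbs_add_le _ _
      _ ≤ W.length + 1 := by
          rw [Finset.sum_add_distrib, hsingle]
          gcongr

lemma exists_obar_mul_of_zpow_eq (W : List (Fin k × Bool)) (i : Fin k) (ε : ℤˣ) :
    ∃ p ≤ W.length, ∃ g ∈ commutatorConjugates (W.length + 1) ^ p,
      obar (FreeGroup.mk W) * FreeGroup.of i ^ (ε : ℤ) =
        obar (FreeGroup.mk W * FreeGroup.of i ^ (ε : ℤ)) * g := by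
  simp only [obar_eq_orderedProd, exponentVector_mul_of_zpow]
  exact exists_orderedProd_mul_of_zpow_eq (List.pairwise_lt_finRange k) (List.mem_finRange i) _ ε
    (sum_natAbs_exponentVector_mk_le W)

lemma exists_mk_eq_obar_mul (W : List (Fin k × Bool)) :
    ∃ p ≤ W.length.choose 2, ∃ g ∈ commutatorConjugates W.length ^ p,
      FreeGroup.mk W = obar (FreeGroup.mk W) * g := by
  induction W using List.reverseRecOn with
  | nil =>
    refine ⟨0, le_rfl, 1, by simp, ?_⟩
    simp [← FreeGroup.one_eq_mk, obar_eq_orderedProd, orderedProd]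
  | append_singleton W x ih =>
    obtain ⟨p, hp, g, hg, hW⟩ := ih
    obtain ⟨ε, hε⟩ := exists_mk_append_singleton_eq W x
    obtain ⟨q, hq, c, hc, hmove⟩ := exists_obar_mul_of_zpow_eq W x.1 ε
    set t := FreeGroup.of x.1 ^ (ε : ℤ) with ht
    have hconj : t⁻¹ * g * t ∈ commutatorConjugates (W.length + 1) ^ p := by
      simpa [ht, norm_of_zpow] using conj_mem_commutatorConjugates_pow hg t
    rw [hε, List.length_append, List.length_singleton]
    refine ⟨q + p, ?_, c * (t⁻¹ * g * t), ?_, ?_⟩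
    · rw [Nat.choose_succ_succ', Nat.choose_one_right]
      gcongr
    · rw [pow_add]
      exact Set.mul_mem_mul hc hconj
    · calc FreeGroup.mk W * t = obar (FreeGroup.mk W) * g * t := by rw [← hW]
        _ = obar (FreeGroup.mk W) * t * (t⁻¹ * g * t) := by group
        _ = obar (FreeGroup.mk W * t) * (c * (t⁻¹ * g * t)) := by rw [hmove, mul_assoc]

end ExponentVector

/-- Every word `w` of reduced length `n` in the free group on
`t₁,…,t_k` equals `w̄` times a product of at most `n²` conjugates of commutators
`[tᵢ,tⱼ]^{±1}` (`i < j`), with conjugators of reduced length at most `n`. -/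
theorem free_group_ordering (k : ℕ) (w : FreeGroup (Fin k)) (n : ℕ)
    (hn : freeNorm w = n) :
    ∃ p : ℕ, p ≤ n ^ 2 ∧
      ∃ (u : Fin p → FreeGroup (Fin k)) (ij : Fin p → Fin k × Fin k) (ε : Fin p → ℤ),
        (∀ s, freeNorm (u s) ≤ n) ∧ (∀ s, (ij s).1 < (ij s).2) ∧
        (∀ s, ε s = 1 ∨ ε s = -1) ∧
        w = obar w * (List.ofFn fun s => (u s)⁻¹ *
          (pcomm (FreeGroup.of (ij s).1) (FreeGroup.of (ij s).2)) ^ (ε s) * u s).prod := by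
  obtain ⟨p, hp, g, hg, hw⟩ := exists_mk_eq_obar_mul w.toWord
  have hlength : w.toWord.length = n := (freeNorm_eq_norm w).symm.trans hn
  rw [hlength] at hp hg
  obtain ⟨f, rfl⟩ := Set.mem_pow.1 hg
  choose u i j ε hu hij hf using fun s => (f s).2
  refine ⟨p, hp.trans (Nat.choose_le_pow n 2), u, fun s => (i s, j s), fun s => ε s,
    fun s => (freeNorm_eq_norm (u s)).trans_le (hu s), hij,
    fun s => Int.isUnit_iff.1 (ε s).isUnit, ?_⟩
  simpa only [FreeGroup.mk_toWord, hf] using hw
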